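/- arXiv:2604.27424 — 2 statements merged into one kernel-verified Lean document; each statement's English description precedes it below -/
import Mathlib

section
/- For all integers k ≥ 2 and p ≥ 2, mdi_k(S'_{p,⌊k/2⌋+1}) = f_k(p·(⌊k/2⌋+1)) and mdi_k(S_{p,⌊k/2⌋+1}) = f_k(p·(⌊k/2⌋+1) + 1). -/
/-- `J` is a distance-`k` independent set in `G`: any two distinct vertices of `J`
are at graph distance at least `k + 1`. -/
def DkIndep {V : Type*} (G : SimpleGraph V) (k : ℕ) (J : Set V) : Prop :=
  ∀ ⦃u⦄, u ∈ J → ∀ ⦃v⦄, v ∈ J → u ≠ v → k + 1 ≤ G.dist u v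

/-- `J` is a maximal distance-`k` independent set (`k`-MDIS) of `G`. -/
def MaxDkIndep {V : Type*} (G : SimpleGraph V) (k : ℕ) (J : Set V) : Prop :=
  DkIndep G k J ∧ ∀ J', DkIndep G k J' → J ⊆ J' → J' = J

/-- `mdi G k` is the number of maximal distance-`k` independent sets of `G`. -/
noncomputable def mdi {V : Type*} (G : SimpleGraph V) (k : ℕ) : ℕ :=
  {J : Set V | MaxDkIndep G k J}.ncard

/-- `f_k(n)` from the paper. -/
def fk (k n : ℕ) : ℕ :=
  if n ≤ k + 1 then n else n - (n - k % 2) / (k / 2 + 1) + 1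

/-- closed ball `N_k[x]`. -/
def ball {V : Type*} (G : SimpleGraph V) (k : ℕ) (x : V) : Set V :=
  {v | G.dist x v ≤ k}

/-- a leaf is a vertex of degree 1. -/
def IsLeaf {V : Type*} (G : SimpleGraph V) (v : V) : Prop :=
  (G.neighborSet v).ncard = 1

/-- eccentricity of a vertex. -/
noncomputable def ecc {V : Type*} [Fintype V] (G : SimpleGraph V) (v : V) : ℕ :=
  Finset.univ.sup (G.dist v)

/-- diameter of a finite graph. -/
noncomputable def gdiam {V : Type*} [Fintype V] (G : SimpleGraph V) : ℕ :=
  Finset.univ.sup (ecc G)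

/-- a central vertex is one of minimum eccentricity. -/
def IsCentral {V : Type*} [Fintype V] (G : SimpleGraph V) (v : V) : Prop :=
  ∀ u, ecc G v ≤ ecc G u

/-- a `k`-twin: some other vertex has the same closed `k`-ball. -/
def KTwin {V : Type*} (G : SimpleGraph V) (k : ℕ) (u : V) : Prop :=
  ∃ v, v ≠ u ∧ ball G k u = ball G k v

/-- a diametral leaf: a leaf whose eccentricity equals the diameter. -/
def IsDiametralLeaf {V : Type*} [Fintype V] (G : SimpleGraph V) (u : V) : Prop :=
  IsLeaf G u ∧ ecc G u = gdiam G

/-- a `k`-special pair. -/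
def KSpecial {V : Type*} [Fintype V] (G : SimpleGraph V) (k : ℕ) (x y : V) : Prop :=
  IsDiametralLeaf G x ∧ IsDiametralLeaf G y ∧ KTwin G k x ∧ KTwin G k y ∧
    ball G k x ≠ ball G k y

/-- `mdi*_k(G, ℓ)`. -/
noncomputable def mdiStar {V : Type*} (G : SimpleGraph V) (k : ℕ) (ℓ : V) : ℕ :=
  {J : Set V | MaxDkIndep G k J ∧ ℓ ∈ J ∧ ∃ w ∉ J, ball G k w ∩ J = {ℓ}}.ncard

/-- The spider tree `S_{p,m}`: a center (`none`) together with `p` legs of `m` vertices. -/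
def spider (p m : ℕ) : SimpleGraph (Option (Fin p × Fin m)) :=
  SimpleGraph.fromRel fun a b =>
    match a, b with
    | none, some (_, j) => (j : ℕ) = 0
    | some (i, j), some (i', j') => i = i' ∧ (j : ℕ) + 1 = (j' : ℕ)
    | _, _ => False

/-- `S'_{p,m}`: the spider `S_{p,m}` with one leaf at distance `m` from the center removed. -/
def spider' (p m : ℕ) (hp : 0 < p) (hm : 0 < m) :=
  (spider p m).induce
    {v | v ≠ some (⟨0, hp⟩, ⟨m - 1, Nat.sub_lt hm Nat.one_pos⟩)}

/-- The double spider `B_{p₁,p₂,s}`: two adjacent centers (`Sum.inl false`, `Sum.inl true`),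
with `p₁` legs of `s` vertices on the first and `p₂` legs of `s` vertices on the second. -/
def btree (p₁ p₂ s : ℕ) : SimpleGraph (Bool ⊕ ((Fin p₁ ⊕ Fin p₂) × Fin s)) :=
  SimpleGraph.fromRel fun a b =>
    match a, b with
    | Sum.inl x, Sum.inl y => x ≠ y
    | Sum.inl false, Sum.inr (Sum.inl _, j) => (j : ℕ) = 0
    | Sum.inl true, Sum.inr (Sum.inr _, j) => (j : ℕ) = 0
    | Sum.inr (c, j), Sum.inr (c', j') => c = c' ∧ (j : ℕ) + 1 = (j' : ℕ)
    | _, _ => False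

/-- `G` contains a subgraph isomorphic to `H`. -/
def ContainsSub {V W : Type*} (G : SimpleGraph V) (H : SimpleGraph W) : Prop :=
  ∃ f : W → V, Function.Injective f ∧ ∀ a b, H.Adj a b → G.Adj (f a) (f b)

/-- A pendant path on `s` vertices `P 0, …, P (s-1)` attached to `w`:
`P 0` is a leaf, consecutive vertices are adjacent, interior vertices have degree 2,
and `P (s-1)` is adjacent to `w`. -/
def IsPendantPath {V : Type*} (T : SimpleGraph V) (s : ℕ) (P : ℕ → V) (w : V) : Prop :=
  Set.InjOn P (Set.Iio s) ∧ (∀ i < s, P i ≠ w) ∧ IsLeaf T (P 0) ∧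
    (∀ i, i + 1 < s → T.Adj (P i) (P (i + 1))) ∧
    (∀ i, 0 < i → i < s → (T.neighborSet (P i)).ncard = 2) ∧
    T.Adj (P (s - 1)) w

/-- Isomorphism of simple graphs on `Fin n` as a setoid. -/
def graphSetoid (n : ℕ) : Setoid (SimpleGraph (Fin n)) where
  r G H := Nonempty (G ≃g H)
  iseqv := ⟨fun _ => ⟨SimpleGraph.Iso.refl⟩, fun ⟨e⟩ => ⟨e.symm⟩, fun ⟨e⟩ ⟨f⟩ => ⟨e.trans f⟩⟩

/-- The number of isomorphism classes of graphs in a set of graphs on `Fin n`. -/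
noncomputable def numIsoClasses {n : ℕ} (S : Set (SimpleGraph (Fin n))) : ℕ :=
  ((fun G => Quotient.mk (graphSetoid n) G) '' S).ncard

theorem mdi_abs {V W : Type*} [Fintype W] (G : SimpleGraph V) (k : ℕ) (e : W → V)
    (inj : Function.Injective e) (h1 : ∀ a b, G.dist (e a) (e b) ≤ k)
    (h2 : ∀ u, u ∉ Set.range e → ∀ v, v ∉ Set.range e → u ≠ v → k + 1 ≤ G.dist u v) :
    ((∀ a, ∃ v, v ∉ Set.range e ∧ G.dist (e a) v ≤ k) → mdi G k = Fintype.card W + 1) ∧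
    ((∃ a, ∀ v, v ∉ Set.range e → k + 1 ≤ G.dist (e a) v) → mdi G k = Fintype.card W) := by
  classical
  let F : W → Set V := fun a => {v | v = e a ∨ (v ∉ Set.range e ∧ k + 1 ≤ G.dist (e a) v)}
  have Find : ∀ a, DkIndep G k (F a) := by
    intro a u hu v hv huv
    rcases hu with rfl | ⟨hu, hu'⟩ <;> rcases hv with rfl | ⟨hv, hv'⟩
    · exact absurd rfl huv
    · exact hv'
    · rw [G.dist_comm]; exact hu'
    · exact h2 u hu v hv huv
  have sub : ∀ J, DkIndep G k J → ∀ a, e a ∈ J → J ⊆ F a := by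
    intro J hJ a ha v hv
    by_cases hva : v = e a
    · exact Or.inl hva
    · have h := hJ ha hv (Ne.symm hva)
      refine Or.inr ⟨?_, h⟩
      rintro ⟨b, rfl⟩
      have := h1 a b
      omega
  have Fmax : ∀ a, MaxDkIndep G k (F a) := by
    intro a
    refine ⟨Find a, fun J' hJ' hs => ?_⟩
    exact Set.Subset.antisymm (sub J' hJ' a (hs (Or.inl rfl))) hs
  have Finj : Function.Injective F := by
    intro a b hab
    have : e a ∈ F b := hab ▸ (Or.inl rfl : e a ∈ F a)
    rcases this with h | h
    · exact inj h
    · exact absurd ⟨a, rfl⟩ h.1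
  have Lind : DkIndep G k (Set.range e)ᶜ := fun u hu v hv huv => h2 u hu v hv huv
  have char : ∀ J, MaxDkIndep G k J → J ∈ Set.range F ∨ J = (Set.range e)ᶜ := by
    intro J hJ
    by_cases h : ∃ a, e a ∈ J
    · obtain ⟨a, ha⟩ := h
      exact Or.inl ⟨a, hJ.2 _ (Find a) (sub J hJ.1 a ha)⟩
    · refine Or.inr (hJ.2 _ Lind ?_).symm
      rintro v hv ⟨a, rfl⟩
      exact h ⟨a, hv⟩
  have Lnot : (Set.range e)ᶜ ∉ Set.range F := by
    rintro ⟨a, ha⟩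
    have : e a ∈ (Set.range e)ᶜ := ha ▸ (Or.inl rfl : e a ∈ F a)
    exact this ⟨a, rfl⟩
  have card : (Set.range F).ncard = Fintype.card W := by
    rw [← Set.image_univ, Set.ncard_image_of_injective _ Finj, Set.ncard_univ,
      Nat.card_eq_fintype_card]
  constructor
  · intro h3
    have : {J : Set V | MaxDkIndep G k J} = insert (Set.range e)ᶜ (Set.range F) := by
      ext J
      constructor
      · intro hJ
        exact (char J hJ).symm
      · rintro (rfl | ⟨a, rfl⟩)
        · refine ⟨Lind, fun J' hJ' hs => Set.Subset.antisymm ?_ hs⟩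
          rintro v hv ⟨a, rfl⟩
          obtain ⟨w, hw, hd⟩ := h3 a
          have := hJ' hv (hs hw) (fun h => hw ⟨a, h⟩)
          omega
        · exact Fmax a
    rw [mdi, this, Set.ncard_insert_of_notMem Lnot (Set.finite_range F), card]
  · rintro ⟨a, h3⟩
    have : {J : Set V | MaxDkIndep G k J} = Set.range F := by
      ext J
      constructor
      · intro hJ
        rcases char J hJ with h | rfl
        · exact h
        · exfalso
          have := hJ.2 (F a) (Find a) (fun v hv => Or.inr ⟨hv, h3 v hv⟩)
          exact Lnot ⟨a, this⟩
      · rintro ⟨a, rfl⟩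
        exact Fmax a
    rw [mdi, this, card]

theorem dist_root {V : Type*} (G : SimpleGraph V) (h : V → ℕ) (c : V)
    (h0 : ∀ v, h v = 0 → v = c) (hs : ∀ v n, h v = n + 1 → ∃ w, G.Adj v w ∧ h w = n) :
    G.Connected ∧ ∀ u v, G.dist u v ≤ h u + h v := by
  have key : ∀ n v, h v = n → ∃ q : G.Walk v c, q.length = n := by
    intro n
    induction n with
    | zero => intro v hv; obtain rfl := h0 v hv; exact ⟨.nil, rfl⟩
    | succ n ih =>
      intro v hv
      obtain ⟨w, hw, hn⟩ := hs v n hv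
      obtain ⟨q, hq⟩ := ih w hn
      exact ⟨.cons hw q, by simp [hq]⟩
  have : Nonempty V := ⟨c⟩
  constructor
  · refine ⟨fun u v => ?_⟩
    obtain ⟨q, -⟩ := key _ u rfl
    obtain ⟨q', -⟩ := key _ v rfl
    exact ⟨q.append q'.reverse⟩
  · intro u v
    obtain ⟨q, hq⟩ := key _ u rfl
    obtain ⟨q', hq'⟩ := key _ v rfl
    have := G.dist_le (q.append q'.reverse)
    simpa [hq, hq'] using this

theorem dist_lip {V : Type*} (G : SimpleGraph V) (hc : G.Connected) (φ : V → ℤ)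
    (hφ : ∀ u v, G.Adj u v → φ u - φ v ≤ 1) (u v : V) : φ u - φ v ≤ G.dist u v := by
  obtain ⟨q, hq⟩ := hc.exists_walk_length_eq_dist u v
  rw [← hq]
  clear hq
  induction q with
  | nil => simp
  | cons h q ih => 
    have := hφ _ _ h
    simp only [SimpleGraph.Walk.length_cons]
    push_cast
    linarith

def hgt {p m : ℕ} : Option (Fin p × Fin m) → ℕ
  | none => 0
  | some (_, j) => j + 1

def phi {p m : ℕ} (i : Fin p) : Option (Fin p × Fin m) → ℤ
  | none => 0
  | some (i', j) => if i' = i then (j : ℤ) + 1 else -((j : ℤ) + 1)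

theorem phi_lip {p m : ℕ} (i : Fin p) (u v : Option (Fin p × Fin m))
    (h : (spider p m).Adj u v) : phi i u - phi i v ≤ 1 := by
  rcases u with _ | ⟨a, b⟩ <;> rcases v with _ | ⟨c, d⟩ <;>
    simp only [spider, SimpleGraph.fromRel_adj, phi] at h ⊢
  · simp
  · have h' : (d : ℕ) = 0 := by simpa using h
    split_ifs <;> omega
  · have h' : (b : ℕ) = 0 := by simpa using h
    split_ifs <;> omega
  · obtain ⟨-, ⟨rfl, h⟩ | ⟨rfl, h⟩⟩ := h <;> split_ifs <;> omega

theorem parent {p m : ℕ} (v : Option (Fin p × Fin m)) (n : ℕ) (hv : hgt v = n + 1) :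
    ∃ w, (spider p m).Adj v w ∧ hgt w = n ∧
      ∀ i (j : Fin m), w = some (i, j) → (j : ℕ) + 1 < m := by
  rcases v with _ | ⟨i, j⟩
  · simp [hgt] at hv
  · simp only [hgt] at hv
    rcases n with _ | n
    · refine ⟨none, ?_, rfl, by simp⟩
      simp only [spider, SimpleGraph.fromRel_adj]
      exact ⟨by simp, Or.inr (by omega)⟩
    · have hj := j.2
      refine ⟨some (i, ⟨n, by omega⟩), ?_, rfl, ?_⟩
      · simp only [spider, SimpleGraph.fromRel_adj]
        refine ⟨?_, Or.inr ⟨trivial, by omega⟩⟩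
        intro h
        simp only [Option.some.injEq, Prod.mk.injEq, true_and] at h
        have := congrArg Fin.val h
        simp at this
        omega
      · rintro i' j' h
        simp only [Option.some.injEq, Prod.mk.injEq] at h
        rw [← h.2]; simp; omega

theorem spider_leg {p m : ℕ} (hc : (spider p m).Connected) (i : Fin p) : ∀ n (j j' : Fin m),
    (j : ℕ) + n = j' → (spider p m).dist (some (i, j)) (some (i, j')) ≤ n := by
  intro n
  induction n with
  | zero =>
    intro j j' h
    obtain rfl : j = j' := Fin.ext (by omega)
    simp
  | succ n ih =>
    intro j j' h
    have hj := j'.2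
    have h1 := ih ⟨j + 1, by omega⟩ j' (by simp; omega)
    have h2 : (spider p m).Adj (some (i, j)) (some (i, ⟨j + 1, by omega⟩)) := by
      simp only [spider, SimpleGraph.fromRel_adj]
      refine ⟨?_, Or.inl ⟨trivial, trivial⟩⟩
      intro h
      simp only [Option.some.injEq, Prod.mk.injEq, true_and] at h
      have := congrArg Fin.val h
      simp at this
    have h3 := hc.dist_triangle (u := some (i, j)) (v := some (i, ⟨j + 1, by omega⟩))
      (w := some (i, j'))
    rw [SimpleGraph.dist_eq_one_iff_adj.2 h2] at h3
    omega

def emb (p r : ℕ) : Option (Fin p × Fin r) → Option (Fin p × Fin (r + 1)) :=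
  Option.map (Prod.map id Fin.castSucc)

theorem emb_inj (p r : ℕ) : Function.Injective (emb p r) :=
  Option.map_injective (Function.Injective.prodMap Function.injective_id
    (Fin.castSucc_injective r))

theorem emb_hgt (p r : ℕ) (a) : hgt (emb p r a) ≤ r := by
  rcases a with _ | ⟨i, j⟩
  · simp [emb, hgt]
  · simp [emb, hgt]

theorem emb_range (p r : ℕ) (v) : v ∉ Set.range (emb p r) ↔ ∃ i, v = some (i, Fin.last r) := by
  constructor
  · intro h
    rcases v with _ | ⟨i, j⟩
    · exact absurd ⟨none, rfl⟩ h
    · refine ⟨i, ?_⟩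
      rcases Fin.eq_castSucc_or_eq_last j with ⟨j', rfl⟩ | rfl
      · exact absurd ⟨some (i, j'), rfl⟩ h
      · rfl
  · rintro ⟨i, rfl⟩ ⟨a, ha⟩
    have := emb_hgt p r a
    rw [ha] at this
    simp [hgt] at this

theorem spider_basic (p m : ℕ) : (spider p m).Connected ∧
    ∀ u v, (spider p m).dist u v ≤ hgt u + hgt v := by
  refine dist_root _ hgt none ?_ ?_
  · rintro (_ | ⟨i, j⟩) h
    · rfl
    · simp [hgt] at h
  · intro v n h
    obtain ⟨w, h1, h2, -⟩ := parent v n h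
    exact ⟨w, h1, h2⟩

theorem spider'_basic (p m : ℕ) (hp : 0 < p) (hm : 0 < m) : (spider' p m hp hm).Connected ∧
    ∀ u v, (spider' p m hp hm).dist u v ≤ hgt u.1 + hgt v.1 := by
  refine dist_root _ (fun v : {v : Option (Fin p × Fin m) |
      v ≠ some (⟨0, hp⟩, ⟨m - 1, Nat.sub_lt hm Nat.one_pos⟩)} => hgt v.1) ⟨none, by simp⟩ ?_ ?_
  · rintro ⟨_ | ⟨i, j⟩, hv⟩ h
    · rfl
    · simp [hgt] at h
  · intro v n h
    obtain ⟨w, h1, h2, h3⟩ := parent v.1 n h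
    refine ⟨⟨w, ?_⟩, h1, h2⟩
    rintro rfl
    have := h3 _ _ rfl
    simp at this
    omega

theorem mdi_spider (k p : ℕ) (hk : 2 ≤ k) (hp : 2 ≤ p) :
    mdi (spider p (k / 2 + 1)) k = p * (k / 2) + 2 := by
  obtain ⟨hc, hd⟩ := spider_basic p (k / 2 + 1)
  have := (mdi_abs (spider p (k / 2 + 1)) k (emb p (k / 2)) (emb_inj _ _) ?_ ?_).1 ?_
  · rw [this]; simp
  · intro a b
    have h1 := emb_hgt _ _ a
    have h2 := emb_hgt _ _ b
    have := hd (emb p (k / 2) a) (emb p (k / 2) b)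
    omega
  · intro u hu v hv huv
    obtain ⟨i, rfl⟩ := (emb_range _ _ _).1 hu
    obtain ⟨i', rfl⟩ := (emb_range _ _ _).1 hv
    have hne : i' ≠ i := by rintro rfl; exact huv rfl
    have := dist_lip _ hc (phi i) (phi_lip i) (some (i, Fin.last (k / 2)))
      (some (i', Fin.last (k / 2)))
    simp [phi, hne] at this
    omega
  · rintro (_ | ⟨i, j⟩)
    · refine ⟨some (⟨0, by omega⟩, Fin.last _), (emb_range _ _ _).2 ⟨_, rfl⟩, ?_⟩
      have := hd none (some (⟨0, by omega⟩, Fin.last _))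
      simp only [hgt, Fin.val_last] at this
      simp only [emb, Option.map_none]
      omega
    · refine ⟨some (i, Fin.last _), (emb_range _ _ _).2 ⟨_, rfl⟩, ?_⟩
      have := spider_leg hc i (k / 2 - j) j.castSucc (Fin.last _) (by simp)
      simp only [emb, Option.map_some, Prod.map, id]
      omega

theorem mdi_spider' (k p : ℕ) (hk : 2 ≤ k) (hp : 2 ≤ p) (h1 : 0 < p) (h2 : 0 < k / 2 + 1) :
    mdi (spider' p (k / 2 + 1) h1 h2) k = p * (k / 2) + 1 + k % 2 := by
  obtain ⟨hc, hd⟩ := spider'_basic p (k / 2 + 1) h1 h2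
  have hmem : ∀ a, emb p (k / 2) a ∈ {v : Option (Fin p × Fin (k / 2 + 1)) |
      v ≠ some (⟨0, h1⟩, ⟨k / 2 + 1 - 1, Nat.sub_lt h2 Nat.one_pos⟩)} := by
    intro a h
    have := emb_hgt _ _ a
    rw [h] at this
    simp [hgt] at this
  let e : Option (Fin p × Fin (k / 2)) → {v : Option (Fin p × Fin (k / 2 + 1)) |
      v ≠ some (⟨0, h1⟩, ⟨k / 2 + 1 - 1, Nat.sub_lt h2 Nat.one_pos⟩)} :=
    fun a => ⟨emb p (k / 2) a, hmem a⟩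
  have lip : ∀ i u v, (phi i u.1 - phi i v.1 : ℤ) ≤ (spider' p (k / 2 + 1) h1 h2).dist u v :=
    fun i u v => dist_lip _ hc (fun v => phi i v.1) (fun u v h => phi_lip i u.1 v.1 h) u v
  have hr : ∀ v, v ∉ Set.range e → ∃ i, i ≠ ⟨0, h1⟩ ∧ v.1 = some (i, Fin.last (k / 2)) := by
    intro v hv
    obtain ⟨i, hi⟩ := (emb_range p (k / 2) v.1).1
      (by rintro ⟨a, ha⟩; exact hv ⟨a, Subtype.ext ha⟩)
    refine ⟨i, ?_, hi⟩
    rintro rfl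
    exact v.2 hi
  have key := mdi_abs (spider' p (k / 2 + 1) h1 h2) k e ?_ ?_ ?_
  · rcases Nat.mod_two_eq_zero_or_one k with hk2 | hk2
    · rw [key.2, hk2]
      · simp
      · refine ⟨some (⟨0, h1⟩, ⟨k / 2 - 1, by omega⟩), fun v hv => ?_⟩
        obtain ⟨i, hi, hv⟩ := hr v hv
        have := lip ⟨0, h1⟩ (e (some (⟨0, h1⟩, ⟨k / 2 - 1, by omega⟩))) v
        rw [hv] at this
        simp [phi, hi, e, emb] at this
        simp only [e, emb, Option.map_some, Prod.map, id, Fin.castSucc_mk]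
        omega
    · rw [key.1, hk2]
      · simp
      · intro a
        refine ⟨⟨some (⟨1, by omega⟩, Fin.last _), ?_⟩, ?_, ?_⟩
        · simp
        · rintro ⟨b, hb⟩
          exact (emb_range p (k / 2) _).2 ⟨_, rfl⟩ ⟨b, congrArg Subtype.val hb⟩
        · refine (hd _ _).trans ?_
          have := emb_hgt p (k / 2) a
          have h5 : hgt (some ((⟨1, by omega⟩ : Fin p), Fin.last (k / 2))) = k / 2 + 1 := rfl
          simp only [h5, e]
          omega
  · intro a b h
    exact emb_inj _ _ (congrArg Subtype.val h)
  · intro a b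
    have h1 := emb_hgt _ _ a
    have h2 := emb_hgt _ _ b
    have := hd (e a) (e b)
    simp only [e] at this ⊢
    omega
  · intro u hu v hv huv
    obtain ⟨i, -, hi⟩ := hr u hu
    obtain ⟨i', -, hi'⟩ := hr v hv
    have hne : i' ≠ i := by rintro rfl; exact huv (Subtype.ext (hi.trans hi'.symm))
    have := lip i u v
    rw [hi, hi'] at this
    simp [phi, hne] at this
    omega

/-- For `k ≥ 2` and `p ≥ 2`,
`mdi_k(S'_{p,⌊k/2⌋+1}) = f_k(p(⌊k/2⌋+1))` and `mdi_k(S_{p,⌊k/2⌋+1}) = f_k(p(⌊k/2⌋+1)+1)`. -/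
theorem stmt_1 (k p : ℕ) (hk : 2 ≤ k) (hp : 2 ≤ p) :
    mdi (spider' p (k / 2 + 1) (by omega) (by omega)) k = fk k (p * (k / 2 + 1)) ∧
    mdi (spider p (k / 2 + 1)) k = fk k (p * (k / 2 + 1) + 1) := by
  rw [mdi_spider' k p hk hp, mdi_spider k p hk hp]
  have hkk := Nat.div_add_mod k 2
  unfold fk
  generalize k / 2 = r at *
  have e1 : p * (r + 1) = p * r + p := by ring
  have hpr : 2 * r ≤ p * r := Nat.mul_le_mul_right r hp
  have hq : (p * (r + 1)) / (r + 1) = p := Nat.mul_div_cancel _ (by omega)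
  rcases Nat.mod_two_eq_zero_or_one k with h | h <;> rw [h] at hkk ⊢
  · have hq' : (p * (r + 1) + 1) / (r + 1) = p := by
      rw [Nat.div_eq_iff (by omega)]
      constructor <;> omega
    rw [if_neg (by omega), if_neg (by omega), Nat.sub_zero, Nat.sub_zero, hq, hq']
    omega
  · rw [if_neg (by omega : ¬ p * (r + 1) + 1 ≤ k + 1), Nat.add_sub_cancel, hq]
    refine ⟨?_, by omega⟩
    split_ifs with hle
    · obtain rfl : p = 2 := by
        by_contra hne
        have : 3 * r ≤ p * r := Nat.mul_le_mul_right r (by omega)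
        omega
      omega
    · obtain ⟨s, rfl⟩ : ∃ s, p = s + 1 := ⟨p - 1, by omega⟩
      have hq' : ((s + 1) * (r + 1) - 1) / (r + 1) = s := by
        have e2 : (s + 1) * (r + 1) - 1 = s * (r + 1) + r := by
          have : (s + 1) * (r + 1) = s * (r + 1) + r + 1 := by ring
          omega
        rw [e2, Nat.div_eq_iff (by omega)]
        constructor <;> omega
      rw [hq']
      omega
end

section
/- Let k ≥ 2 be even, let p ≥ 2, and let T be a tree on n = p·(k/2 + 1) vertices of diameter at most k + 2. Then mdi_k(T) ≥ f_k(n), with equality if and only if T is isomorphic to S'_{p,k/2+1}. -/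
structure RTree {V : Type} (T : SimpleGraph V) (c : V) (par : V → V) : Prop where
  conn : T.Connected
  padj : ∀ v, v ≠ c → T.Adj (par v) v
  pd : ∀ v, v ≠ c → T.dist c (par v) + 1 = T.dist c v
  adj : ∀ u v, T.Adj u v → (v ≠ c ∧ u = par v) ∨ (u ≠ c ∧ v = par u)

lemma rtree_exists {V : Type} (T : SimpleGraph V) (hT : T.IsTree) (c : V) :
    ∃ par, RTree T c par := by
  have hconn := hT.connected
  have hex : ∀ v, v ≠ c → ∃ u, T.Adj u v ∧ T.dist c u + 1 = T.dist c v := by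
    intro v hv
    obtain ⟨w, hw⟩ := hconn.exists_walk_length_eq_dist v c
    cases w with
    | nil => exact absurd rfl hv
    | cons h q =>
      rename_i u
      refine ⟨u, h.symm, ?_⟩
      simp only [SimpleGraph.Walk.length_cons] at hw
      have h1 := SimpleGraph.dist_le q
      have h2 := hT.dist_eq_dist_add_one_of_adj c h
      rw [SimpleGraph.dist_comm] at h1 hw
      omega
  have huni : ∀ v u u', T.Adj u v → T.Adj u' v → T.dist c u + 1 = T.dist c v →
      T.dist c u' + 1 = T.dist c v → u = u' := by
    intro v u u' h h' hd hd'
    obtain ⟨w, hw⟩ := hconn.exists_walk_length_eq_dist u c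
    obtain ⟨w', hw'⟩ := hconn.exists_walk_length_eq_dist u' c
    have e1 : (SimpleGraph.Walk.cons h.symm w).IsPath := by
      apply SimpleGraph.Walk.isPath_of_length_eq_dist
      rw [SimpleGraph.Walk.length_cons, hw, SimpleGraph.dist_comm, hd, SimpleGraph.dist_comm]
    have e2 : (SimpleGraph.Walk.cons h'.symm w').IsPath := by
      apply SimpleGraph.Walk.isPath_of_length_eq_dist
      rw [SimpleGraph.Walk.length_cons, hw', SimpleGraph.dist_comm, hd', SimpleGraph.dist_comm]
    have := (hT.existsUnique_path v c).unique e1 e2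
    have h3 := congrArg SimpleGraph.Walk.snd this
    simpa using h3
  classical
  choose! par hpar using hex
  refine ⟨par, hconn, fun v hv => (hpar v hv).1, fun v hv => (hpar v hv).2, ?_⟩
  intro u v h
  have key : ∀ u v, T.Adj u v → T.dist c v = T.dist c u + 1 → v ≠ c ∧ u = par v := by
    intro u v h hd
    have hv : v ≠ c := by
      rintro rfl
      simp at hd
    exact ⟨hv, huni v _ _ h (hpar v hv).1 hd.symm (hpar v hv).2⟩
  rcases hT.dist_eq_dist_add_one_of_adj c h with h1 | h1
  · right
    exact key v u h.symm h1
  · left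
    exact key u v h h1

/-- ancestor of v at depth j -/
noncomputable def anc {V : Type} (T : SimpleGraph V) (c : V) (par : V → V) (v : V) (j : ℕ) : V :=
  par^[T.dist c v - j] v

lemma walk_branch {V β : Type} {T : SimpleGraph V} (c : V) (d : V → ℕ) (b : V → β)
    (hd0 : d c = 0) (hd : ∀ u v, T.Adj u v → d u ≤ d v + 1)
    (hb : ∀ u v, T.Adj u v → u ≠ c → v ≠ c → b u = b v) {u v : V} (w : T.Walk u v) :
    d v ≤ w.length + d u ∧ (b u ≠ b v → d u + d v ≤ w.length) := by
  induction w with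
  | nil => simp
  | cons h q ih =>
    rename_i x y z
    have h1 := hd _ _ h
    have h2 := hd _ _ h.symm
    simp only [SimpleGraph.Walk.length_cons]
    refine ⟨by omega, fun hne => ?_⟩
    by_cases hx : x = c
    · subst hx; omega
    by_cases hy : y = c
    · subst hy; omega
    have := hb _ _ h hx hy
    rw [this] at hne
    have := ih.2 hne
    omega

lemma dist_branch {V β : Type} {T : SimpleGraph V} (hc : T.Connected) (c : V) (d : V → ℕ) (b : V → β)
    (hd0 : d c = 0) (hd : ∀ u v, T.Adj u v → d u ≤ d v + 1)
    (hb : ∀ u v, T.Adj u v → u ≠ c → v ≠ c → b u = b v) {u v : V} (h : b u ≠ b v) :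
    d u + d v ≤ T.dist u v := by
  obtain ⟨w, hw⟩ := hc.exists_walk_length_eq_dist u v
  rw [← hw]
  exact (walk_branch c d b hd0 hd hb w).2 h

namespace RTree

variable {V : Type} {T : SimpleGraph V} {c : V} {par : V → V} (R : RTree T c par)

lemma ne_c (R : RTree T c par) {v : V} (h : 0 < T.dist c v) : v ≠ c := by
  rintro rfl
  simp at h

lemma eq_c (R : RTree T c par) {v : V} (h : T.dist c v = 0) : v = c :=
  ((R.conn.dist_eq_zero_iff).1 h).symm

lemma iter (R : RTree T c par) (j : ℕ) (v : V) (h : j ≤ T.dist c v) :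
    T.dist c (par^[j] v) + j = T.dist c v ∧ T.dist (par^[j] v) v ≤ j := by
  induction j with
  | zero => simp
  | succ j ih =>
    have ⟨h1, h2⟩ := ih (by omega)
    rw [Function.iterate_succ_apply']
    have hne : par^[j] v ≠ c := R.ne_c (by omega)
    have h3 := R.pd _ hne
    have h4 := SimpleGraph.dist_eq_one_iff_adj.2 (R.padj _ hne)
    have h5 := R.conn.dist_triangle (u := par (par^[j] v)) (v := par^[j] v) (w := v)
    omega

lemma anc_d (R : RTree T c par) {v : V} {j : ℕ} (h : j ≤ T.dist c v) :
    T.dist c (anc T c par v j) = j := by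
  have := (R.iter (T.dist c v - j) v (by omega)).1
  unfold anc
  omega

lemma anc_dist (R : RTree T c par) {v : V} {j : ℕ} (h : j ≤ T.dist c v) :
    T.dist (anc T c par v j) v ≤ T.dist c v - j :=
  (R.iter (T.dist c v - j) v (by omega)).2

lemma par_anc (R : RTree T c par) {v : V} {j : ℕ} (h : j + 1 ≤ T.dist c v) :
    par (anc T c par v (j + 1)) = anc T c par v j := by
  unfold anc
  rw [← Function.iterate_succ_apply' par]
  congr 2
  omega

lemma anc_anc (R : RTree T c par) {v : V} {i j : ℕ} (hij : i ≤ j) (h : j ≤ T.dist c v) :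
    anc T c par (anc T c par v j) i = anc T c par v i := by
  have := R.anc_d h
  unfold anc at this ⊢
  rw [this, ← Function.iterate_add_apply]
  congr 2
  omega

lemma anc_zero (R : RTree T c par) (v : V) : anc T c par v 0 = c :=
  R.eq_c (R.anc_d (by omega))

lemma br_adj (R : RTree T c par) (u v : V) (h : T.Adj u v) (hu : u ≠ c) (hv : v ≠ c) :
    anc T c par u 1 = anc T c par v 1 := by
  have key : ∀ v, v ≠ c → par v ≠ c → anc T c par (par v) 1 = anc T c par v 1 := by
    intro v hv hp
    have h1 := R.pd v hv
    have h2 := R.conn.pos_dist_of_ne hp.symm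
    unfold anc
    rw [← Function.iterate_succ_apply]
    congr 2
    omega
  rcases R.adj u v h with ⟨h1, h2⟩ | ⟨h1, h2⟩
  · subst h2; exact key v hv hu
  · subst h2; exact (key u hu hv).symm

lemma d_adj (R : RTree T c par) (u v : V) (h : T.Adj u v) : T.dist c u ≤ T.dist c v + 1 := by
  have h4 := SimpleGraph.dist_eq_one_iff_adj.2 h.symm
  have h5 := R.conn.dist_triangle (u := c) (v := v) (w := u)
  omega

lemma dist_ne (R : RTree T c par) {u v : V} (h : anc T c par u 1 ≠ anc T c par v 1) :
    T.dist c u + T.dist c v ≤ T.dist u v :=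
  dist_branch R.conn c (T.dist c) (fun v => anc T c par v 1) (by simp) R.d_adj R.br_adj h

lemma dist_le (R : RTree T c par) (u v : V) : T.dist u v ≤ T.dist c u + T.dist c v := by
  have h5 := R.conn.dist_triangle (u := u) (v := c) (w := v)
  rw [SimpleGraph.dist_comm (u := u) (v := c)] at h5
  exact h5

lemma dist_eq (R : RTree T c par) {u v : V} (h : anc T c par u 1 = anc T c par v 1)
    (hu : 1 ≤ T.dist c u) (hv : 1 ≤ T.dist c v) :
    T.dist u v + 2 ≤ T.dist c u + T.dist c v := by
  have h5 := R.conn.dist_triangle (u := u) (v := anc T c par u 1) (w := v)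
  have h1 := R.anc_dist hu
  have h2 := R.anc_dist hv
  rw [← h] at h2
  rw [SimpleGraph.dist_comm] at h1
  omega

end RTree

lemma dist_le_gdiam {V : Type} [Fintype V] (T : SimpleGraph V) (u v : V) : T.dist u v ≤ gdiam T :=
  (Finset.le_sup (f := T.dist u) (Finset.mem_univ v)).trans
    (Finset.le_sup (f := ecc T) (Finset.mem_univ u))

lemma exists_center {V : Type} [Fintype V] (T : SimpleGraph V) (hT : T.IsTree) (s : ℕ)
    (hd : gdiam T ≤ 2 * s + 2) : ∃ c, ∀ v, T.dist c v ≤ s + 1 := by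
  have := hT.connected.nonempty
  obtain ⟨c, hc⟩ := Finite.exists_min (ecc T)
  refine ⟨c, ?_⟩
  have hex : ∀ b, ∃ y, T.dist b y = ecc T b := by
    intro b
    obtain ⟨y, -, hy⟩ := Finset.exists_mem_eq_sup Finset.univ Finset.univ_nonempty (T.dist b)
    exact ⟨y, hy.symm⟩
  have hle : ∀ b y, T.dist b y ≤ ecc T b := fun b y =>
    Finset.le_sup (f := T.dist b) (Finset.mem_univ y)
  by_contra hcon
  push Not at hcon
  obtain ⟨v, hv⟩ := hcon
  obtain ⟨par, R⟩ := rtree_exists T hT c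
  obtain ⟨x, hx⟩ := hex c
  have hr := hle c v
  obtain ⟨y, hy⟩ := hex (anc T c par x 1)
  have h1 := hc (anc T c par x 1)
  have h2 := hle c y
  have hb1 : T.dist c (anc T c par x 1) = 1 := R.anc_d (by omega)
  have h3 := R.dist_le (anc T c par x 1) y
  by_cases hbr : anc T c par x 1 = anc T c par y 1
  · have := R.anc_dist (v := y) (j := 1) (by omega)
    rw [← hbr] at this
    omega
  · have h4 := R.dist_ne hbr
    have h5 := dist_le_gdiam T x y
    omega

lemma exists_max_ext {V : Type} [Fintype V] (T : SimpleGraph V) (k : ℕ) (I : Set V)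
    (hI : DkIndep T k I) : ∃ J, I ⊆ J ∧ MaxDkIndep T k J := by
  obtain ⟨J, hIJ, hJ⟩ := (Set.toFinite {J : Set V | DkIndep T k J}).exists_le_maximal hI
  refine ⟨J, hIJ, hJ.1, fun J' h1 h2 => ?_⟩
  exact Set.Subset.antisymm (hJ.2 h1 h2) h2

lemma max_mem {V : Type} {T : SimpleGraph V} {k : ℕ} {J : Set V} (hJ : MaxDkIndep T k J) {x : V}
    (h : ∀ u ∈ J, u ≠ x → k + 1 ≤ T.dist u x) : x ∈ J := by
  have : DkIndep T k (insert x J) := by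
    rintro u (rfl | hu) v (rfl | hv) huv
    · exact absurd rfl huv
    · rw [SimpleGraph.dist_comm]; exact h v hv huv.symm
    · exact h u hu huv
    · exact hJ.1 hu hv huv
  rw [← hJ.2 _ this (Set.subset_insert _ _)]
  exact Set.mem_insert _ _

lemma lower_count {V : Type} [Fintype V] {T : SimpleGraph V} {c : V} {par : V → V}
    (R : RTree T c par) (s : ℕ) (hs : 1 ≤ s) (hd : ∀ v, T.dist c v ≤ s + 1) (D : Finset V)
    (hDd : ∀ x ∈ D, T.dist c x = s + 1)
    (hDi : ∀ x ∈ D, ∀ y ∈ D, anc T c par x 1 = anc T c par y 1 → x = y)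
    (hDc : ∀ x, T.dist c x = s + 1 → ∃ y ∈ D, anc T c par y 1 = anc T c par x 1) :
    Fintype.card V ≤ mdi T (2 * s) + D.card ∧
    (MaxDkIndep T (2 * s) (D : Set V) → Fintype.card V + 1 ≤ mdi T (2 * s) + D.card) := by
  classical
  have hM : ∀ w, ∃ J, w ∉ D → MaxDkIndep T (2 * s) J ∧ w ∈ J ∧
      ∀ x ∈ J, T.dist c x = s + 1 → x ∉ D → x = w := by
    intro w
    by_cases hw : w ∈ D
    · exact ⟨∅, fun h => absurd hw h⟩
    have hdw := hd w
    by_cases hlt : T.dist c w < s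
    · obtain ⟨J, hJ1, hJ2⟩ := exists_max_ext T (2 * s) {w} (by
        rintro u rfl v rfl h; exact absurd rfl h)
      have hwJ : w ∈ J := hJ1 rfl
      refine ⟨J, fun _ => ⟨hJ2, hwJ, ?_⟩⟩
      intro x hx hxd _
      by_contra hne
      have := hJ2.1 hx hwJ hne
      have := R.dist_le x w
      omega
    · obtain ⟨J, hJ1, hJ2⟩ := exists_max_ext T (2 * s)
        (insert w {x | x ∈ D ∧ anc T c par x 1 ≠ anc T c par w 1}) (by
        rintro u (rfl | ⟨hu, hu'⟩) v (rfl | ⟨hv, hv'⟩) huv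
        · exact absurd rfl huv
        · have := R.dist_ne hv'.symm
          have := hDd v hv
          omega
        · have := R.dist_ne hu'
          have := hDd u hu
          omega
        · have := R.dist_ne (u := u) (v := v) (fun h => huv (hDi u hu v hv h))
          have := hDd u hu
          have := hDd v hv
          omega)
      have hwJ : w ∈ J := hJ1 (Or.inl rfl)
      refine ⟨J, fun _ => ⟨hJ2, hwJ, ?_⟩⟩
      intro x hx hxd hxD
      by_contra hne
      obtain ⟨y, hyD, hy⟩ := hDc x hxd
      have hyd := hDd y hyD
      by_cases hyw : anc T c par y 1 = anc T c par w 1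
      · have h1 := hJ2.1 hx hwJ hne
        have := R.dist_eq (u := x) (v := w) (hy ▸ hyw) (by omega) (by omega)
        omega
      · have hyJ : y ∈ J := hJ1 (Or.inr ⟨hyD, hyw⟩)
        have h1 := hJ2.1 hyJ hx (fun h => hxD (h ▸ hyD))
        have := R.dist_eq hy (by omega) (by omega)
        omega
  choose M hM using hM
  have hinj : Set.InjOn M ((Dᶜ : Finset V) : Set V) := by
    intro u hu v hv huv
    simp only [Finset.coe_compl, Set.mem_compl_iff, Finset.mem_coe] at hu hv
    obtain ⟨u1, u2, u3⟩ := hM u hu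
    obtain ⟨v1, v2, v3⟩ := hM v hv
    have du := hd u
    have dv := hd v
    by_cases h1 : T.dist c u = s + 1
    · exact v3 u (huv ▸ u2) h1 hu
    by_cases h2 : T.dist c v = s + 1
    · exact (u3 v (huv ▸ v2) h2 hv).symm
    by_contra hne
    have := u1.1 u2 (huv ▸ v2) hne
    have := R.dist_le u v
    omega
  have hcard : (M '' ((Dᶜ : Finset V) : Set V)).ncard + D.card = Fintype.card V := by
    rw [hinj.ncard_image, Set.ncard_coe_finset, Finset.card_compl]
    have := Finset.card_le_univ D
    omega
  have hsub : M '' ((Dᶜ : Finset V) : Set V) ⊆ {J | MaxDkIndep T (2 * s) J} := by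
    rintro _ ⟨w, hw, rfl⟩
    simp only [Finset.coe_compl, Set.mem_compl_iff, Finset.mem_coe] at hw
    exact (hM w hw).1
  constructor
  · have := Set.ncard_le_ncard hsub
    unfold mdi
    omega
  · intro hD
    have hnot : (D : Set V) ∉ M '' ((Dᶜ : Finset V) : Set V) := by
      rintro ⟨w, hw, h⟩
      simp only [Finset.coe_compl, Set.mem_compl_iff, Finset.mem_coe] at hw
      have := (hM w hw).2.1
      rw [h] at this
      exact hw this
    have h1 := Set.ncard_le_ncard (Set.insert_subset (show (D : Set V) ∈ {J | MaxDkIndep T (2 * s) J}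
      from hD) hsub)
    rw [Set.ncard_insert_of_notMem hnot] at h1
    unfold mdi
    omega

/-- legs map -/
noncomputable def legs {V ι : Type} (T : SimpleGraph V) (c : V) (par : V → V) (l : ι → V) {m : ℕ} :
    Option (ι × Fin m) → V
  | none => c
  | some (i, j) => anc T c par (l i) ((j : ℕ) + 1)

lemma legs_inj {V ι : Type} {T : SimpleGraph V} {c : V} {par : V → V}
    (R : RTree T c par) (l : ι → V) (hl : ∀ i i', anc T c par (l i) 1 = anc T c par (l i') 1 → i = i')
    {m : ℕ} (a b : Option (ι × Fin m)) (ha : ∀ i j, a = some (i, j) → (j : ℕ) < T.dist c (l i))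
    (hb : ∀ i j, b = some (i, j) → (j : ℕ) < T.dist c (l i))
    (h : legs T c par l a = legs T c par l b) : a = b := by
  rcases a with _ | ⟨i, j⟩ <;> rcases b with _ | ⟨i', j'⟩
  · rfl
  · have h1 := hb i' j' rfl
    have := R.anc_d (v := l i') (j := j' + 1) (by omega)
    simp only [legs] at h
    rw [← h] at this
    simp at this
  · have h1 := ha i j rfl
    have := R.anc_d (v := l i) (j := j + 1) (by omega)
    simp only [legs] at h
    rw [h] at this
    simp at this
  · have h1 := ha i j rfl
    have h1' := hb i' j' rfl
    have h2 := R.anc_d (v := l i) (j := j + 1) (by omega)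
    have h2' := R.anc_d (v := l i') (j := j' + 1) (by omega)
    have h3 := R.anc_anc (v := l i) (i := 1) (j := j + 1) (by omega) (by omega)
    have h3' := R.anc_anc (v := l i') (i := 1) (j := j' + 1) (by omega) (by omega)
    simp only [legs] at h
    rw [h] at h2 h3
    have hi := hl i i' (by rw [← h3, h3'])
    subst hi
    have : j = j' := Fin.ext (by omega)
    rw [this]

/-- the spider relation -/
def srel {p m : ℕ} : Option (Fin p × Fin m) → Option (Fin p × Fin m) → Prop
  | none, some (_, j) => (j : ℕ) = 0
  | some (i, j), some (i', j') => i = i' ∧ (j : ℕ) + 1 = (j' : ℕ)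
  | _, none => False

lemma spider_adj {p m : ℕ} (a b : Option (Fin p × Fin m)) :
    (spider p m).Adj a b ↔ a ≠ b ∧ (srel a b ∨ srel b a) := by
  unfold spider
  rw [SimpleGraph.fromRel_adj]
  rcases a with _ | ⟨i, j⟩ <;> rcases b with _ | ⟨i', j'⟩ <;> simp [srel]

lemma iso_of_legs {V : Type} [Fintype V] {T : SimpleGraph V} {c : V} {par : V → V}
    (R : RTree T c par) (p m : ℕ) (hp : 0 < p) (hm : 0 < m) (hcard : Fintype.card V = p * m)
    (l : Fin p → V) (hl : ∀ i i', anc T c par (l i) 1 = anc T c par (l i') 1 → i = i')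
    (hl0 : T.dist c (l ⟨0, hp⟩) = m - 1) (hl1 : ∀ i, i ≠ ⟨0, hp⟩ → T.dist c (l i) = m) :
    Nonempty (T ≃g spider' p m hp hm) := by
  classical
  let x0 : Option (Fin p × Fin m) := some (⟨0, hp⟩, ⟨m - 1, Nat.sub_lt hm Nat.one_pos⟩)
  have hok : ∀ a : Option (Fin p × Fin m), a ≠ x0 →
      ∀ i j, a = some (i, j) → (j : ℕ) < T.dist c (l i) := by
    rintro _ ha i j rfl
    by_cases hi : i = ⟨0, hp⟩
    · subst hi
      rw [hl0]
      have : (j : ℕ) ≠ m - 1 := by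
        intro h
        apply ha
        simp only [x0]
        congr 2
        exact Fin.ext h
      omega
    · rw [hl1 i hi]; omega
  let F : {v // v ≠ x0} → V := fun v => legs T c par l v.1
  have hinj : Function.Injective F := fun a b h =>
    Subtype.ext (legs_inj R l hl a.1 b.1 (hok _ a.2) (hok _ b.2) h)
  have hbij : Function.Bijective F := by
    rw [Fintype.bijective_iff_injective_and_card]
    refine ⟨hinj, ?_⟩
    rw [hcard, Fintype.card_subtype_compl, Fintype.card_option, Fintype.card_prod]
    simp
  have h1 : ∀ a b : {v // v ≠ x0}, srel a.1 b.1 → F b ≠ c ∧ F a = par (F b) := by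
    rintro ⟨a, ha⟩ ⟨b, hb⟩ h
    simp only at h
    rcases b with _ | ⟨i', j'⟩
    · rcases a with _ | ⟨i, j⟩ <;> exact h.elim
    have hj := hok _ hb i' j' rfl
    refine ⟨?_, ?_⟩
    · apply R.ne_c
      simp only [F, legs]
      rw [R.anc_d (by omega)]
      omega
    rcases a with _ | ⟨i, j⟩
    · simp only [srel] at h
      simp only [F, legs]
      rw [R.par_anc (by omega), h, R.anc_zero]
    · simp only [srel] at h
      obtain ⟨rfl, h⟩ := h
      simp only [F, legs]
      rw [R.par_anc (by omega), h]
  have h2 : ∀ b : {v // v ≠ x0}, F b ≠ c → ∃ a : {v // v ≠ x0}, srel a.1 b.1 := by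
    rintro ⟨b, hb⟩ h
    rcases b with _ | ⟨i, ⟨j, hj⟩⟩
    · exact absurd rfl h
    rcases j with _ | j
    · exact ⟨⟨none, by simp [x0]⟩, by simp [srel]⟩
    · refine ⟨⟨some (i, ⟨j, by omega⟩), ?_⟩, by simp [srel]⟩
      simp only [x0, ne_eq, Option.some.injEq, Prod.mk.injEq, Fin.mk.injEq]
      omega
  have h3 : ∀ a b : {v // v ≠ x0}, F b ≠ c → F a = par (F b) → srel a.1 b.1 := by
    intro a b hb hab
    obtain ⟨a', ha'⟩ := h2 b hb
    have := (h1 a' b ha').2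
    rw [← hab] at this
    rw [← hinj this]
    exact ha'
  have hadj : ∀ a b : {v // v ≠ x0}, T.Adj (F a) (F b) ↔ (spider p m).Adj a.1 b.1 := by
    intro a b
    rw [spider_adj]
    constructor
    · intro h
      refine ⟨fun hab => h.ne (by rw [Subtype.ext hab]), ?_⟩
      rcases R.adj _ _ h with ⟨g1, g2⟩ | ⟨g1, g2⟩
      · exact Or.inl (h3 _ _ g1 g2)
      · exact Or.inr (h3 _ _ g1 g2)
    · rintro ⟨-, h | h⟩
      · obtain ⟨g1, g2⟩ := h1 _ _ h
        rw [g2]; exact R.padj _ g1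
      · obtain ⟨g1, g2⟩ := h1 _ _ h
        rw [g2]; exact (R.padj _ g1).symm
  exact ⟨(RelIso.symm ⟨Equiv.ofBijective F hbij, fun {a b} => hadj a b⟩ : T ≃g spider' p m hp hm)⟩

lemma upper_count {V : Type} [Fintype V] (T : SimpleGraph V) (k : ℕ) (A : Finset V)
    (h1 : ∀ u ∈ A, ∀ v ∈ A, u ≠ v → k + 1 ≤ T.dist u v)
    (h2 : ∀ u ∉ A, ∀ v ∉ A, T.dist u v ≤ k)
    (h3 : ∃ y ∉ A, ∀ x ∈ A, k + 1 ≤ T.dist x y) : mdi T k + A.card ≤ Fintype.card V := by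
  classical
  obtain ⟨y, hyA, hy⟩ := h3
  have hex : ∀ J, ∃ w, MaxDkIndep T k J → w ∈ J ∧ w ∉ A := by
    intro J
    by_cases hJ : MaxDkIndep T k J
    · by_contra hcon
      push Not at hcon
      have hJA : ∀ w ∈ J, w ∈ A := fun w => (hcon w).2
      exact hyA (hJA y (max_mem hJ (fun u hu _ => hy u (hJA u hu))))
    · exact ⟨y, fun h => absurd h hJ⟩
  choose W hW using hex
  have hinj : Set.InjOn W {J | MaxDkIndep T k J} := by
    have key : ∀ J J', MaxDkIndep T k J → MaxDkIndep T k J' → W J = W J' → J ⊆ J' := by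
      intro J J' hJ hJ' h x hx
      obtain ⟨g1, g2⟩ := hW J hJ
      obtain ⟨g1', g2'⟩ := hW J' hJ'
      by_cases hxw : x = W J
      · rw [hxw, h]; exact g1'
      have hxd := hJ.1 hx g1 hxw
      have hxA : x ∈ A := by
        by_contra hxA
        have := h2 x hxA _ g2
        omega
      apply max_mem hJ'
      intro u hu hux
      by_cases huA : u ∈ A
      · exact h1 u huA x hxA hux
      · have : u = W J := by
          by_contra hne
          have := hJ'.1 hu g1' (h ▸ hne)
          have := h2 u huA _ g2'
          omega
        rw [this, SimpleGraph.dist_comm]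
        exact hxd
    intro J hJ J' hJ' h
    exact Set.Subset.antisymm (key J J' hJ hJ' h) (key J' J hJ' hJ h.symm)
  have hle : {J | MaxDkIndep T k J}.ncard ≤ ((Aᶜ : Finset V) : Set V).ncard :=
    Set.ncard_le_ncard_of_injOn W (fun J hJ => by
      simpa using (hW J hJ).2) hinj
  rw [Set.ncard_coe_finset, Finset.card_compl] at hle
  have := Finset.card_le_univ A
  unfold mdi
  omega

/-- depth in the spider -/
def sdep {p m : ℕ} : Option (Fin p × Fin m) → ℕ
  | none => 0
  | some (_, j) => j + 1

/-- leg in the spider -/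
def sleg {p m : ℕ} : Option (Fin p × Fin m) → Option (Fin p)
  | none => none
  | some (i, _) => some i

lemma upper_of_iso {V : Type} [Fintype V] (T : SimpleGraph V) (hT : T.Connected) (p s : ℕ)
    (hp : 0 < p) (hs : 1 ≤ s) (e : T ≃g spider' p (s + 1) hp (Nat.succ_pos s)) :
    mdi T (2 * s) + (p - 1) ≤ Fintype.card V := by
  classical
  let d : V → ℕ := fun v => sdep (e v).1
  let b : V → Option (Fin p) := fun v => sleg (e v).1
  let c : V := e.symm ⟨none, by simp⟩
  have hadj : ∀ u v, T.Adj u v → srel (e u).1 (e v).1 ∨ srel (e v).1 (e u).1 := by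
    intro u v h
    have h' : (spider p (s + 1)).Adj (e u).1 (e v).1 := e.map_rel_iff.2 h
    exact ((spider_adj _ _).1 h').2
  have hec : (e c).1 = none := by simp [c]
  have hnc : ∀ u, u ≠ c → (e u).1 ≠ none := by
    intro u hu h
    apply hu
    apply e.injective
    exact Subtype.ext (h.trans hec.symm)
  have hd1 : ∀ x y : Option (Fin p × Fin (s + 1)), srel x y → sdep y = sdep x + 1 := by
    rintro (_ | ⟨i, j⟩) (_ | ⟨i', j'⟩) h <;> simp [srel, sdep] at h ⊢ <;> omega
  have hb1 : ∀ x y : Option (Fin p × Fin (s + 1)), srel x y → x ≠ none → sleg x = sleg y := by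
    rintro (_ | ⟨i, j⟩) (_ | ⟨i', j'⟩) h <;> simp [srel, sleg] at h ⊢
    exact h.1
  have hlow : ∀ u v, b u ≠ b v → d u + d v ≤ T.dist u v := by
    intro u v h
    refine dist_branch hT c d b (by simp [d, hec, sdep]) ?_ ?_ h
    · intro u v h
      simp only [d]
      rcases hadj u v h with h | h <;> have := hd1 _ _ h <;> omega
    · intro u v h hu hv
      rcases hadj u v h with h | h
      · exact hb1 _ _ h (hnc u hu)
      · exact (hb1 _ _ h (hnc v hv)).symm
  have hup0 : ∀ (j : ℕ) (i : Fin p) (hj : j < s + 1)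
      (hmem : some (i, (⟨j, hj⟩ : Fin (s + 1))) ∈ {v : Option (Fin p × Fin (s + 1)) |
        v ≠ some (⟨0, hp⟩, ⟨s + 1 - 1, Nat.sub_lt (Nat.succ_pos s) Nat.one_pos⟩)}),
      T.dist c (e.symm ⟨some (i, ⟨j, hj⟩), hmem⟩) ≤ j + 1 := by
    intro j
    induction j with
    | zero =>
      intro i hj hmem
      have : T.Adj c (e.symm ⟨some (i, ⟨0, hj⟩), hmem⟩) := by
        apply e.map_rel_iff.1
        simp only [RelIso.apply_symm_apply, c]
        change (spider p (s + 1)).Adj none _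
        rw [spider_adj]
        simp [srel]
      rw [SimpleGraph.dist_eq_one_iff_adj.2 this]
    | succ j ih =>
      intro i hj hmem
      have hmem' : some (i, (⟨j, by omega⟩ : Fin (s + 1))) ∈ {v : Option (Fin p × Fin (s + 1)) |
        v ≠ some (⟨0, hp⟩, ⟨s + 1 - 1, Nat.sub_lt (Nat.succ_pos s) Nat.one_pos⟩)} := by
        simp only [Set.mem_ofPred_eq, ne_eq, Option.some.injEq, Prod.mk.injEq, Fin.mk.injEq]
        omega
      have h1 := ih i (by omega) hmem'
      have : T.Adj (e.symm ⟨_, hmem'⟩) (e.symm ⟨some (i, ⟨j + 1, hj⟩), hmem⟩) := by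
        apply e.map_rel_iff.1
        simp only [RelIso.apply_symm_apply]
        change (spider p (s + 1)).Adj (some _) (some _)
        rw [spider_adj]
        simp [srel]
      have h2 := SimpleGraph.dist_eq_one_iff_adj.2 this
      have h3 := hT.dist_triangle (u := c) (v := e.symm ⟨_, hmem'⟩)
        (w := e.symm ⟨some (i, ⟨j + 1, hj⟩), hmem⟩)
      omega
  have hup : ∀ v, T.dist c v ≤ d v := by
    intro v
    obtain ⟨⟨x, hx⟩, rfl⟩ := e.symm.surjective v
    rcases x with _ | ⟨i, ⟨j, hj⟩⟩
    · have : T.dist c (e.symm ⟨none, hx⟩) = 0 := SimpleGraph.dist_self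
      omega
    · have := hup0 j i hj hx
      simpa [d, sdep] using this
  have hds : ∀ v, d v ≤ s + 1 := by
    intro v
    simp only [d]
    generalize (e v).1 = x
    rcases x with _ | ⟨i, ⟨j, hj⟩⟩ <;> simp only [sdep] <;> omega
  let A : Finset V := Finset.univ.filter (fun v => d v = s + 1)
  have hA : ∀ v, v ∈ A ↔ d v = s + 1 := by simp [A]
  have hcardA : p - 1 ≤ A.card := by
    have hm : ∀ i : Fin (p - 1), some ((⟨i + 1, by omega⟩ : Fin p), (⟨s, by omega⟩ : Fin (s + 1))) ∈
      {v : Option (Fin p × Fin (s + 1)) |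
        v ≠ some (⟨0, hp⟩, ⟨s + 1 - 1, Nat.sub_lt (Nat.succ_pos s) Nat.one_pos⟩)} := by
      intro i
      simp
    have := Finset.card_le_card_of_injOn (s := (Finset.univ : Finset (Fin (p - 1)))) (t := A)
      (fun i => e.symm ⟨_, hm i⟩) (by
        intro i _
        apply Finset.mem_coe.2
        rw [hA]
        simp [d, sdep]) (by
        intro i _ i' _ h
        have h' := e.symm.injective h
        simp only [Subtype.mk.injEq, Option.some.injEq, Prod.mk.injEq, Fin.mk.injEq] at h'
        exact Fin.ext (by omega))
    simpa using this
  have hy : some ((⟨0, hp⟩ : Fin p), (⟨s - 1, by omega⟩ : Fin (s + 1))) ∈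
      {v : Option (Fin p × Fin (s + 1)) |
        v ≠ some (⟨0, hp⟩, ⟨s + 1 - 1, Nat.sub_lt (Nat.succ_pos s) Nat.one_pos⟩)} := by
    simp only [Set.mem_ofPred_eq, ne_eq, Option.some.injEq, Prod.mk.injEq, Fin.mk.injEq]
    omega
  have hmain := upper_count T (2 * s) A ?_ ?_ ?_
  · omega
  · intro u hu v hv huv
    rw [hA] at hu hv
    have hbne : b u ≠ b v := by
      intro hb
      apply huv
      apply e.injective
      apply Subtype.ext
      simp only [d, b] at hu hv hb
      revert hu hv hb
      generalize (e u).1 = x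
      generalize (e v).1 = y
      rcases x with _ | ⟨i, j⟩ <;> rcases y with _ | ⟨i', j'⟩ <;> simp [sdep, sleg]
      intro g1 g2 g3
      exact ⟨g3, Fin.ext (by omega)⟩
    have := hlow u v hbne
    omega
  · intro u hu v hv
    rw [hA] at hu hv
    have h1 := hup u
    have h2 := hup v
    have h3 := hds u
    have h4 := hds v
    have h5 := hT.dist_triangle (u := u) (v := c) (w := v)
    rw [SimpleGraph.dist_comm (u := u) (v := c)] at h5
    omega
  · have hdy : d (e.symm ⟨_, hy⟩) = s := by
      simp [d, sdep]
      omega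
    refine ⟨e.symm ⟨_, hy⟩, ?_, ?_⟩
    · rw [hA, hdy]; omega
    · intro x hx
      rw [hA] at hx
      have hbne : b x ≠ b (e.symm ⟨_, hy⟩) := by
        have hx2 := (e x).2
        simp only [d, b, RelIso.apply_symm_apply] at hx ⊢
        revert hx hx2
        generalize (e x).1 = z
        rcases z with _ | ⟨i, j⟩
        · simp [sdep]
        · intro g2 g1 g3
          simp only [sdep, sleg, Option.some.injEq] at g2 g3
          apply g1
          subst g3
          congr 2
          exact Fin.ext (by simp; omega)
      have := hlow _ _ hbne
      omega

lemma main_aux (s : ℕ) (hs : 1 ≤ s) (p : ℕ) (hp : 2 ≤ p) (hp0 : 0 < p)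
    {V : Type} [Fintype V] (hn : Fintype.card V = p * (s + 1))
    (T : SimpleGraph V) (hT : T.IsTree) (hdiam : gdiam T ≤ 2 * s + 2) :
    p * s + 1 ≤ mdi T (2 * s) ∧
    (mdi T (2 * s) = p * s + 1 ↔
      Nonempty (T ≃g spider' p (s + 1) hp0 (Nat.succ_pos s))) := by
  classical
  obtain ⟨c, hc⟩ := exists_center T hT s hdiam
  obtain ⟨par, R⟩ := rtree_exists T hT c
  obtain ⟨D', hD's, hbij⟩ := Set.exists_subset_bijOn {x | T.dist c x = s + 1}
    (fun x => anc T c par x 1)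
  obtain ⟨D, rfl⟩ : ∃ D : Finset V, (D : Set V) = D' := ⟨D'.toFinite.toFinset, by simp⟩
  have hDd : ∀ x ∈ D, T.dist c x = s + 1 := fun x hx => hD's hx
  have hDi : ∀ x ∈ D, ∀ y ∈ D, anc T c par x 1 = anc T c par y 1 → x = y :=
    fun x hx y hy h => hbij.injOn hx hy h
  have hDc : ∀ x, T.dist c x = s + 1 → ∃ y ∈ D, anc T c par y 1 = anc T c par x 1 := by
    intro x hx
    obtain ⟨y, hy, h⟩ := hbij.surjOn ⟨x, hx, rfl⟩
    exact ⟨y, hy, h⟩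
  obtain ⟨hlow, hlow'⟩ := lower_count R s hs hc D hDd hDi hDc
  have hq : D.card < p := by
    have := Fintype.card_le_of_injective
      (legs T c par (fun x : D => x.1) : Option (D × Fin (s + 1)) → V) (by
        intro a b h
        refine legs_inj R _ ?_ a b ?_ ?_ h
        · intro i i' h
          exact Subtype.ext (hDi _ i.2 _ i'.2 h)
        · intro i j _
          rw [hDd _ i.2]; exact j.2
        · intro i j _
          rw [hDd _ i.2]; exact j.2)
    rw [hn, Fintype.card_option, Fintype.card_prod, Fintype.card_coe, Fintype.card_fin] at this
    exact lt_of_mul_lt_mul_right (Nat.lt_of_succ_le this) (Nat.zero_le _)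
  have hexp : p * (s + 1) = p * s + p := by ring
  refine ⟨by omega, ?_, ?_⟩
  · intro heq
    have hqe : D.card + 1 = p := by omega
    have hnm : ¬ MaxDkIndep T (2 * s) (D : Set V) := fun h => by
      have := hlow' h
      omega
    have hDind : DkIndep T (2 * s) (D : Set V) := by
      intro u hu v hv huv
      have := R.dist_ne (u := u) (v := v) (fun h => huv (hDi u hu v hv h))
      have := hDd u hu
      have := hDd v hv
      omega
    obtain ⟨J, hJ1, hJ2⟩ := exists_max_ext T (2 * s) _ hDind
    obtain ⟨y, hyJ, hyD⟩ : ∃ y ∈ J, y ∉ D := by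
      by_contra hcon
      push Not at hcon
      have : J = (D : Set V) := Set.Subset.antisymm hcon hJ1
      exact hnm (this ▸ hJ2)
    have hyc := hc y
    have hdy : ∀ x ∈ D, 2 * s + 1 ≤ T.dist x y := fun x hx =>
      hJ2.1 (hJ1 hx) hyJ (fun h => hyD (h ▸ hx))
    obtain ⟨x, hx⟩ : D.Nonempty := Finset.card_pos.1 (by omega)
    have hys : s ≤ T.dist c y := by
      have := hdy x hx
      have := R.dist_le x y
      have := hDd x hx
      omega
    have hbr : ∀ x ∈ D, anc T c par x 1 ≠ anc T c par y 1 := by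
      intro x hx h
      have h1 := hdy x hx
      have h2 := hDd x hx
      have := R.dist_eq h (by omega) (by omega)
      omega
    have hys' : T.dist c y = s := by
      by_contra hne
      obtain ⟨z, hz, h⟩ := hDc y (by omega)
      exact hbr z hz h
    obtain ⟨q, rfl⟩ : ∃ q, p = q + 1 := ⟨D.card, hqe.symm⟩
    have hqe' : D.card = q := by omega
    let f : Fin q ≃ D := (D.equivFinOfCardEq hqe').symm
    refine iso_of_legs R (q + 1) (s + 1) (by omega) (by omega) hn
      (Fin.cons y (fun i => (f i).1)) ?_ ?_ ?_
    · intro i i'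
      refine Fin.cases ?_ (fun i => ?_) i <;> refine Fin.cases ?_ (fun i' => ?_) i'
      · intro _; rfl
      · intro h
        simp only [Fin.cons_zero, Fin.cons_succ] at h
        exact absurd h.symm (hbr _ (f i').2)
      · intro h
        simp only [Fin.cons_zero, Fin.cons_succ] at h
        exact absurd h (hbr _ (f i).2)
      · intro h
        simp only [Fin.cons_succ] at h
        have := f.injective (Subtype.ext (hDi _ (f i).2 _ (f i').2 h))
        rw [this]
    · change T.dist c y = _
      rw [hys']; rfl
    · intro i
      refine Fin.cases ?_ (fun i => ?_) i
      · intro h; exact absurd rfl h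
      · intro _
        simp only [Fin.cons_succ]
        exact hDd _ (f i).2
  · rintro ⟨e⟩
    have := upper_of_iso T hT.connected p s (by omega) hs e
    omega

/-- Let `k ≥ 2` be even, `p ≥ 2`, and let `T` be a tree on
`n = p(k/2 + 1)` vertices of diameter at most `k + 2`. Then `mdi_k(T) ≥ f_k(n)` with
equality iff `T ≅ S'_{p,k/2+1}`. -/
theorem stmt_12 (k : ℕ) (hk : 2 ≤ k) (hke : Even k) (p : ℕ) (hp : 2 ≤ p)
    {V : Type} [Fintype V] (hn : Fintype.card V = p * (k / 2 + 1))
    (T : SimpleGraph V) (hT : T.IsTree) (hdiam : gdiam T ≤ k + 2) :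
    fk k (p * (k / 2 + 1)) ≤ mdi T k ∧
    (mdi T k = fk k (p * (k / 2 + 1)) ↔
      Nonempty (T ≃g spider' p (k / 2 + 1) (by omega) (by omega))) := by
  obtain ⟨s, rfl⟩ := hke
  have h2 : s + s = 2 * s := by ring
  have hs2 : (s + s) / 2 = s := by omega
  have hf : fk (s + s) (p * ((s + s) / 2 + 1)) = p * s + 1 := by
    have hexp : p * (s + 1) = p * s + p := by ring
    have hps : 2 * (s + 1) ≤ p * (s + 1) := Nat.mul_le_mul_right _ hp
    have hmod : (s + s) % 2 = 0 := by omega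
    unfold fk
    rw [hs2, hmod, if_neg (by omega), Nat.sub_zero, Nat.mul_div_cancel _ (Nat.succ_pos s)]
    omega
  rw [hf]
  have hm := main_aux s (by omega) p hp (by omega) (by rw [hn, hs2]) T hT (by omega)
  rw [← h2] at hm
  have key : ∀ m (h : 0 < m), m = s + 1 →
      (Nonempty (T ≃g spider' p m (by omega) h) ↔
        Nonempty (T ≃g spider' p (s + 1) (by omega) (by omega))) := by
    rintro m h rfl
    rfl
  rw [key ((s + s) / 2 + 1) (by omega) (by omega)]
  exact hm
end
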